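/- arXiv:1303.7182 — 2 statements merged into one kernel-verified Lean document; each statement's English description precedes it below -/
import Mathlib

section
/- Let K ≥ 2 be an integer, let x_1 < ⋯ < x_K be real numbers, and let β_1,…,β_K be real numbers with β_j > −1 for every j and Σ_{j=1}^K β_j < −1. With the conventions x_0 = −∞ and x_{K+1} = +∞, define J_k = ∫_{x_k}^{x_{k+1}} ∏_{j=1}^K |u−x_j|^{β_j} du for k = 0,1,…,K (all of these integrals converge absolutely). Then Σ_{k=0}^{K} exp(iπ Σ_{l=k+1}^{K} β_l) · J_k = 0 as an identity in ℂ; equivalently, Σ_{k=0}^{K} cos(π Σ_{l=k+1}^{K} β_l) J_k = 0 and Σ_{k=0}^{K} sin(π Σ_{l=k+1}^{K} β_l) J_k = 0. -/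
/-!
With principal branches, `F z = ∏ⱼ (z - xⱼ) ^ βⱼ` is holomorphic in the open upper half-plane, and
its values at a real `u`, where each negative base `u - xⱼ` has argument `π`, are
`∏ⱼ |u - xⱼ| ^ βⱼ` times the phase `exp (iπ ∑_{xⱼ > u} βⱼ)` (`F_ofReal`). So the weighted sum of the
`J k` is `∫ F` over the real line, and the claim is that this integral vanishes.

Since `F z = O(‖z‖ ^ b)` with `b = ∑ βⱼ < -1`, Cauchy's theorem on the rectangle with corners
`-R + iε` and `R + i(R + ε)` bounds the integral over its bottom side by a multiple of
`R ^ (1 + b) → 0`; hence `∫ F (u + iε) du = 0` for `0 < ε ≤ 1` (`integral_line_eq_zero`). Dominated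
convergence as `ε → 0` concludes: `h` dominates `F (u + iε)`, and it is integrable because it has
only singularities `|u - xⱼ| ^ βⱼ` with `βⱼ > -1`, at distinct points, and decays like `|u| ^ b`
(`integrable_h`).
-/

open MeasureTheory Filter Set Finset

namespace ContourClosing

open Asymptotics Topology Bornology

/-- The integrand `∏ⱼ (z - xⱼ) ^ βⱼ`, with principal powers. On the real axis Mathlib's convention
`arg = π` for negative reals makes it the limit of its values from the upper half-plane. -/
noncomputable def F (s : Finset ℕ) (x β : ℕ → ℝ) (z : ℂ) : ℂ :=
  ∏ j ∈ s, (z - x j) ^ (β j : ℂ)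

/-- A dominating function for `F (u + iy)`, uniform in `0 ≤ y ≤ 1`. Since
`|u - xⱼ| ≤ ‖u + iy - xⱼ‖ ≤ |u - xⱼ| + 1`, the shift by `1` is needed only for exponents `≥ 0`. -/
noncomputable def h (s : Finset ℕ) (x β : ℕ → ℝ) (u : ℝ) : ℝ :=
  ∏ j ∈ s, (|u - x j| + if 0 ≤ β j then 1 else 0) ^ β j

lemma isBigO_factor {E : Type*} [NormedAddCommGroup E] (a : E) (c b : ℝ) (hc : 0 ≤ c) :
    (fun z : E => (‖z - a‖ + c) ^ b) =O[cobounded E] fun z => (1 + ‖z‖) ^ b := by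
  have hden : Tendsto (fun z : E => 1 + ‖z‖) (cobounded E) atTop :=
    tendsto_atTop_add_const_left _ _ tendsto_norm_cobounded_atTop
  have h0 : Tendsto (fun z : E => (‖a‖ + c + 1) / (1 + ‖z‖)) (cobounded E) (𝓝 0) :=
    hden.const_div_atTop _
  have h1 : Tendsto (fun z : E => (‖z - a‖ + c) / (1 + ‖z‖)) (cobounded E) (𝓝 1) := by
    rw [tendsto_iff_norm_sub_tendsto_zero]
    refine squeeze_zero (fun _ => norm_nonneg _) (fun z => ?_) h0
    have hp : 0 < 1 + ‖z‖ := by positivity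
    rw [div_sub_one hp.ne', norm_div, Real.norm_of_nonneg hp.le]
    gcongr
    have := abs_norm_sub_norm_le (z - a) z
    have h2 : ‖z - a - z‖ = ‖a‖ := by rw [sub_sub_cancel_left, norm_neg]
    rw [h2, abs_le] at this
    rw [Real.norm_eq_abs, abs_le]
    constructor <;> linarith
  have h2 := h1.rpow_const (p := b) (Or.inl one_ne_zero)
  rw [Real.one_rpow] at h2
  refine isBigO_of_div_tendsto_nhds (Eventually.of_forall fun z hz => ?_) 1 (h2.congr fun z => ?_)
  · exact absurd hz (Real.rpow_pos_of_pos (by positivity) _).ne'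
  · rw [Pi.div_apply, Real.div_rpow (by positivity) (by positivity)]

/-- Growth at infinity of a product of powers of (shifted) distances, used on `ℝ` for `h` and on `ℂ`
for `‖F‖`. -/
lemma isBigO_prod {E : Type*} [NormedAddCommGroup E] (s : Finset ℕ) (a : ℕ → E) (c b : ℕ → ℝ)
    (hc : ∀ j, 0 ≤ c j) :
    (fun z : E => ∏ j ∈ s, (‖z - a j‖ + c j) ^ b j) =O[cobounded E]
      fun z => (1 + ‖z‖) ^ ∑ j ∈ s, b j := by
  have := IsBigO.finsetProd (s := s) fun j _ => isBigO_factor (a j) (c j) (b j) (hc j)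
  refine this.congr_right fun z => ?_
  rw [Real.rpow_sum_of_pos (by positivity)]

lemma factor_integrableAt (a c b : ℝ) (hb : -1 < b) (hc : b < 0 → c = 0) :
    IntegrableAtFilter (fun u : ℝ => (|u - a| + c) ^ b) (𝓝 a) volume := by
  by_cases h0 : 0 ≤ b
  · have : Continuous fun u : ℝ => (|u - a| + c) ^ b :=
      Continuous.rpow_const (by fun_prop) fun u => Or.inr h0
    exact this.locallyIntegrable a
  · obtain rfl := hc (not_le.mp h0)
    have h1 := (intervalIntegral.intervalIntegrable_cpow' (a := -1) (b := 1)
      (r := (b : ℂ)) (by simpa using hb)).norm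
    simp only [Complex.norm_cpow_real, Complex.norm_real, Real.norm_eq_abs] at h1
    have h2 := h1.comp_sub_right a
    refine ⟨Set.Ioc (-1 + a) (1 + a), Ioc_mem_nhds (by linarith) (by linarith), ?_⟩
    rw [intervalIntegrable_iff_integrableOn_Ioc_of_le (by linarith)] at h2
    simpa only [add_zero] using h2

lemma continuousAt_factor (a c b p : ℝ) (hc : 0 ≤ c) (h : p ≠ a) :
    ContinuousAt (fun u : ℝ => (|u - a| + c) ^ b) p := by
  refine ContinuousAt.rpow_const (by fun_prop) (Or.inl ?_)
  have := abs_pos.mpr (sub_ne_zero.mpr h)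
  positivity

lemma aesm_h (s : Finset ℕ) (x β : ℕ → ℝ) : Measurable (h s x β) := by
  unfold h
  fun_prop

lemma integrable_h (s : Finset ℕ) (x β : ℕ → ℝ) (hx : Set.InjOn x s)
    (hβ : ∀ j ∈ s, -1 < β j) (hsum : ∑ j ∈ s, β j < -1) : Integrable (h s x β) := by
  have hc0 : ∀ j, 0 ≤ (if 0 ≤ β j then 1 else 0 : ℝ) := fun j => by split_ifs <;> norm_num
  have hloc : LocallyIntegrable (h s x β) := by
    intro p
    by_cases hp : ∃ i ∈ s, x i = p
    · obtain ⟨i, hi, rfl⟩ := hp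
      -- Only the `i`-th factor can be singular at `x i`; the others are continuous there.
      have hO : h s x β =O[𝓝 (x i)] fun u => (|u - x i| + if 0 ≤ β i then 1 else 0) ^ β i := by
        have h1 : (fun u => ∏ j ∈ s.erase i, (|u - x j| + if 0 ≤ β j then 1 else 0) ^ β j)
            =O[𝓝 (x i)] fun _ => (1 : ℝ) := by
          refine Tendsto.isBigO_one ℝ (c := ∏ j ∈ s.erase i, (|x i - x j| + if 0 ≤ β j then 1 else 0) ^ β j) ?_
          refine tendsto_finsetProd _ fun j hj => ?_
          refine continuousAt_factor _ _ _ _ (hc0 j) ?_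
          intro he
          exact (Finset.mem_erase.mp hj).1 (hx (Finset.mem_erase.mp hj).2 hi he.symm)
        have h2 := (isBigO_refl
          (fun u => (|u - x i| + if 0 ≤ β i then 1 else 0) ^ β i) (𝓝 (x i))).mul h1
        simp only [mul_one] at h2
        refine h2.congr_left fun u => ?_
        exact Finset.mul_prod_erase s
          (fun j => (|u - x j| + if 0 ≤ β j then 1 else 0) ^ β j) hi
      refine hO.integrableAtFilter
        (aesm_h s x β).aestronglyMeasurable.stronglyMeasurableAtFilter ?_
      exact factor_integrableAt _ _ _ (hβ i hi) (fun h0 => by simp [h0])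
    · push Not at hp
      have hO : h s x β =O[𝓝 p] fun _ => (1 : ℝ) := by
        refine Tendsto.isBigO_one ℝ (c := h s x β p) ?_
        refine tendsto_finsetProd _ fun j hj => ?_
        exact continuousAt_factor _ _ _ _ (hc0 j) (hp j hj).symm
      exact hO.integrableAtFilter
        (aesm_h s x β).aestronglyMeasurable.stronglyMeasurableAtFilter
        (continuous_const.locallyIntegrable p)
  have hO := isBigO_prod s x (fun j => if 0 ≤ β j then 1 else 0) β hc0
  refine hloc.integrable_of_isBigO_cocompact (g := fun u : ℝ => (1 + ‖u‖) ^ ∑ j ∈ s, β j) ?_ ?_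
  · rw [← Metric.cobounded_eq_cocompact]
    exact hO
  · have := integrable_one_add_norm (E := ℝ) (μ := volume) (r := -∑ j ∈ s, β j)
      (by simp; linarith)
    simpa using this.integrableAtFilter _

lemma sub_mem_slitPlane {z : ℂ} (hz : 0 < z.im) (a : ℝ) : z - a ∈ Complex.slitPlane :=
  Or.inr (by simpa using hz.ne')

lemma differentiableOn_F (s : Finset ℕ) (x β : ℕ → ℝ) :
    DifferentiableOn ℂ (F s x β) {z | 0 < z.im} := by
  intro z hz
  refine DifferentiableAt.differentiableWithinAt ?_
  unfold F
  refine DifferentiableAt.fun_finsetProd fun j _ => ?_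
  exact (differentiableAt_id.sub_const _).cpow (differentiableAt_const _) (sub_mem_slitPlane hz _)

/-- On the negative real axis the principal power is continuous from above, though not from
below. -/
lemma continuousWithinAt_cpow {z : ℂ} (hz : z ≠ 0) (b : ℂ) :
    ContinuousWithinAt (fun w : ℂ => w ^ b) {w | 0 ≤ w.im} z := by
  by_cases hs : z ∈ Complex.slitPlane
  · exact (differentiableAt_id.cpow (differentiableAt_const b) hs).continuousAt.continuousWithinAt
  · have hs' : z.re ≤ 0 ∧ z.im = 0 := by
      simpa [Complex.mem_slitPlane_iff] using hs
    have hre : z.re < 0 := lt_of_le_of_ne hs'.1 fun h => hz (Complex.ext h hs'.2)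
    have hl := Complex.continuousWithinAt_log_of_re_neg_of_im_zero hre hs'.2
    have he := (hl.mul_const b).cexp
    refine ContinuousWithinAt.congr_of_eventuallyEq he ?_ (Complex.cpow_def_of_ne_zero hz b)
    filter_upwards [mem_nhdsWithin_of_mem_nhds (isOpen_ne.mem_nhds hz)] with w hw
    exact Complex.cpow_def_of_ne_zero hw b

lemma norm_F (s : Finset ℕ) (x β : ℕ → ℝ) (z : ℂ) : ‖F s x β z‖ = ∏ j ∈ s, ‖z - x j‖ ^ β j := by
  simp only [F, norm_prod, Complex.norm_cpow_real]

/-- The points `xⱼ` are excluded because `0 ^ βⱼ = 0` for negative `βⱼ`. -/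
lemma norm_F_le (s : Finset ℕ) (x β : ℕ → ℝ) {u y : ℝ} (hu : ∀ j ∈ s, u ≠ x j)
    (hy : 0 ≤ y) (hy1 : y ≤ 1) : ‖F s x β (u + y * Complex.I)‖ ≤ h s x β u := by
  rw [norm_F, h]
  refine Finset.prod_le_prod (fun _ _ => by positivity) fun j hj => ?_
  have hre : |u - x j| ≤ ‖(u + y * Complex.I - x j : ℂ)‖ := by
    simpa using Complex.abs_re_le_norm (u + y * Complex.I - x j : ℂ)
  have hle : ‖(u + y * Complex.I - x j : ℂ)‖ ≤ |u - x j| + 1 := by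
    have := Complex.norm_le_abs_re_add_abs_im (u + y * Complex.I - x j : ℂ)
    simp [abs_of_nonneg hy] at this
    linarith
  have hpos := abs_pos.mpr (sub_ne_zero.mpr (hu j hj))
  split_ifs with h0
  · exact Real.rpow_le_rpow (norm_nonneg _) hle h0
  · rw [add_zero]
    exact Real.rpow_le_rpow_of_nonpos hpos hre (not_le.mp h0).le

lemma measurable_F (s : Finset ℕ) (x β : ℕ → ℝ) (y : ℝ) :
    Measurable fun u : ℝ => F s x β (u + y * Complex.I) := by
  unfold F
  fun_prop

lemma ae_ne (s : Finset ℕ) (x : ℕ → ℝ) : ∀ᵐ u : ℝ, ∀ j ∈ s, u ≠ x j := by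
  rw [Finset.eventually_all]
  intro j _
  exact Measure.ae_ne volume (x j)

lemma integrable_F (s : Finset ℕ) (x β : ℕ → ℝ) (hx : Set.InjOn x s)
    (hβ : ∀ j ∈ s, -1 < β j) (hsum : ∑ j ∈ s, β j < -1) {y : ℝ} (hy : 0 ≤ y) (hy1 : y ≤ 1) :
    Integrable fun u : ℝ => F s x β (u + y * Complex.I) := by
  refine (integrable_h s x β hx hβ hsum).mono' (measurable_F s x β y).aestronglyMeasurable ?_
  filter_upwards [ae_ne s x] with u hu
  exact norm_F_le s x β hu hy hy1

/-- The decay of `F`, in the form used on the three far sides of the rectangle. -/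
lemma exists_bound_F (s : Finset ℕ) (x β : ℕ → ℝ) (hsum : ∑ j ∈ s, β j < -1) :
    ∃ C R₀ : ℝ, 0 < C ∧ ∀ z R, 0 < R → R₀ ≤ R → R ≤ ‖z‖ → ‖F s x β z‖ ≤ C * R ^ ∑ j ∈ s, β j := by
  have hO := isBigO_prod s (fun j => (x j : ℂ)) (fun _ => 0) β (fun _ => le_rfl)
  obtain ⟨C, hC, hb⟩ := hO.exists_pos
  obtain ⟨R₀, -, hR⟩ := (hasBasis_cobounded_norm (E := ℂ)).mem_iff.mp hb.bound
  refine ⟨C, R₀, hC, fun z R hR0 h1 h2 => ?_⟩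
  have h3 := hR (show z ∈ {z | R₀ ≤ ‖z‖} from h1.trans h2)
  simp only [add_zero, Set.mem_ofPred_eq, ← norm_F] at h3
  rw [norm_norm, Real.norm_of_nonneg (by positivity)] at h3
  refine h3.trans ?_
  gcongr C * ?_
  exact Real.rpow_le_rpow_of_nonpos hR0 (by linarith) (by linarith)

lemma integral_line_eq_zero (s : Finset ℕ) (x β : ℕ → ℝ) (hx : Set.InjOn x s)
    (hβ : ∀ j ∈ s, -1 < β j) (hsum : ∑ j ∈ s, β j < -1) {ε : ℝ} (hε : 0 < ε) (hε1 : ε ≤ 1) :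
    ∫ u : ℝ, F s x β (u + ε * Complex.I) = 0 := by
  obtain ⟨C, R₀, hC, hb⟩ := exists_bound_F s x β hsum
  have hlim := intervalIntegral_tendsto_integral (integrable_F s x β hx hβ hsum hε.le hε1)
    tendsto_neg_atTop_atBot tendsto_id
  refine tendsto_nhds_unique hlim ?_
  set b := ∑ j ∈ s, β j
  have hpow : Tendsto (fun R : ℝ => 4 * C * R ^ (-(-1 - b))) atTop (𝓝 0) := by
    simpa using (tendsto_rpow_neg_atTop (by linarith : 0 < -1 - b)).const_mul (4 * C)
  refine squeeze_zero_norm' ?_ hpow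
  filter_upwards [eventually_ge_atTop R₀, eventually_gt_atTop 0] with R hR hR0
  have hrect := Complex.integral_boundary_rect_eq_zero_of_differentiableOn (F s x β)
    (⟨-R, ε⟩) (⟨R, R + ε⟩) ((differentiableOn_F s x β).mono ?_)
  · have hre : ∀ z : ℂ, R ≤ |z.re| → ‖F s x β z‖ ≤ C * R ^ b := fun z hz =>
      hb z R hR0 hR (hz.trans (Complex.abs_re_le_norm z))
    have him : ∀ z : ℂ, R ≤ |z.im| → ‖F s x β z‖ ≤ C * R ^ b := fun z hz =>
      hb z R hR0 hR (hz.trans (Complex.abs_im_le_norm z))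
    have h1 : ‖∫ u in (-R)..R, F s x β (u + ((R + ε : ℝ) : ℂ) * Complex.I)‖
        ≤ C * R ^ b * |R - -R| := intervalIntegral.norm_integral_le_of_norm_le_const fun u _ =>
      him _ (by simpa using (le_abs_self (R + ε)).trans' (by linarith))
    have h2 : ‖∫ y in ε..(R + ε), F s x β ((R : ℂ) + y * Complex.I)‖
        ≤ C * R ^ b * |R + ε - ε| := intervalIntegral.norm_integral_le_of_norm_le_const fun u _ =>
      hre _ (by simpa using le_abs_self R)
    have h3 : ‖∫ y in ε..(R + ε), F s x β (((-R : ℝ) : ℂ) + y * Complex.I)‖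
        ≤ C * R ^ b * |R + ε - ε| := intervalIntegral.norm_integral_le_of_norm_le_const fun u _ =>
      hre _ (by simpa using le_abs_self R)
    rw [abs_of_pos (by linarith)] at h1 h2 h3
    dsimp only at hrect
    have hI : ∀ w : ℂ, ‖Complex.I • w‖ = ‖w‖ := fun w => by simp
    have heq : (∫ u in (-R)..R, F s x β (u + ε * Complex.I))
        = (∫ u in (-R)..R, F s x β (u + ((R + ε : ℝ) : ℂ) * Complex.I))
          - Complex.I • (∫ y in ε..(R + ε), F s x β ((R : ℂ) + y * Complex.I))
          + Complex.I • ∫ y in ε..(R + ε), F s x β (((-R : ℝ) : ℂ) + y * Complex.I) := by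
      linear_combination hrect
    have hR' : R ^ (-(-1 - b)) = R * R ^ b := by
      rw [show -(-1 - b) = 1 + b by ring, Real.rpow_add hR0, Real.rpow_one]
    simp only [id]
    rw [heq, hR']
    refine (norm_add_le _ _).trans ?_
    have := norm_sub_le (∫ u in (-R)..R, F s x β (u + ((R + ε : ℝ) : ℂ) * Complex.I))
      (Complex.I • (∫ y in ε..(R + ε), F s x β ((R : ℂ) + y * Complex.I)))
    rw [hI] at this ⊢
    nlinarith
  · intro z hz
    have := hz.2
    simp only [Set.mem_preimage] at this
    rw [Set.uIcc_of_le (by linarith)] at this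
    exact hε.trans_le this.1

lemma tendsto_F (s : Finset ℕ) (x β : ℕ → ℝ) {u : ℝ} (hu : ∀ j ∈ s, u ≠ x j) :
    Tendsto (fun y : ℝ => F s x β (u + y * Complex.I)) (𝓝[>] 0) (𝓝 (F s x β u)) := by
  unfold F
  refine tendsto_finsetProd _ fun j hj => ?_
  have hne : (u - x j : ℂ) ≠ 0 := by
    exact_mod_cast sub_ne_zero.mpr (hu j hj)
  refine (continuousWithinAt_cpow hne (β j)).tendsto.comp ?_
  refine tendsto_nhdsWithin_iff.mpr ⟨?_, ?_⟩
  · have : Continuous fun y : ℝ => (u + y * Complex.I - x j : ℂ) := by fun_prop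
    have h2 := this.tendsto 0
    simp only [Complex.ofReal_zero, zero_mul, add_zero] at h2
    exact h2.mono_left nhdsWithin_le_nhds
  · filter_upwards [self_mem_nhdsWithin] with y hy
    simpa using (le_of_lt hy : (0:ℝ) ≤ y)

lemma integral_F_eq_zero (s : Finset ℕ) (x β : ℕ → ℝ) (hx : Set.InjOn x s)
    (hβ : ∀ j ∈ s, -1 < β j) (hsum : ∑ j ∈ s, β j < -1) : ∫ u : ℝ, F s x β u = 0 := by
  have hmem : Set.Ioc (0 : ℝ) 1 ∈ 𝓝[>] (0 : ℝ) := Ioc_mem_nhdsGT one_pos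
  have hlim : Tendsto (fun y : ℝ => ∫ u : ℝ, F s x β (u + y * Complex.I)) (𝓝[>] 0)
      (𝓝 (∫ u : ℝ, F s x β u)) := by
    refine tendsto_integral_filter_of_dominated_convergence (h s x β) ?_ ?_
      (integrable_h s x β hx hβ hsum) ?_
    · exact Eventually.of_forall fun y => (measurable_F s x β y).aestronglyMeasurable
    · filter_upwards [hmem] with y hy
      filter_upwards [ae_ne s x] with u hu
      exact norm_F_le s x β hu hy.1.le hy.2
    · filter_upwards [ae_ne s x] with u hu
      exact tendsto_F s x β hu
  refine tendsto_nhds_unique hlim (tendsto_const_nhds.congr' ?_)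
  filter_upwards [hmem] with y hy
  exact (integral_line_eq_zero s x β hx hβ hsum hy.1 hy.2).symm

/-- Boundary values of `F` between `x k` and `x (k + 1)`: each of the negative bases `u - xⱼ`,
`j > k`, contributes the phase `exp (iπ βⱼ)`. -/
lemma F_ofReal (K k : ℕ) (x β : ℕ → ℝ) {u : ℝ}
    (h1 : ∀ j, 1 ≤ j → j ≤ k → x j ≤ u) (h2 : ∀ j, k + 1 ≤ j → j ≤ K → u < x j) :
    F (Finset.Icc 1 K) x β u =
      Complex.exp ((Real.pi : ℂ) * Complex.I * ((∑ l ∈ Finset.Icc (k+1) K, β l : ℝ) : ℂ))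
        * ((∏ j ∈ Finset.Icc 1 K, |u - x j| ^ β j : ℝ) : ℂ) := by
  have hfac : ∀ j ∈ Finset.Icc 1 K, ((u : ℂ) - x j) ^ (β j : ℂ) =
      (if k + 1 ≤ j then Complex.exp ((Real.pi : ℂ) * Complex.I * β j) else 1)
        * ((|u - x j| ^ β j : ℝ) : ℂ) := by
    intro j hj
    rw [Finset.mem_Icc] at hj
    split_ifs with hkj
    · have hneg := sub_neg.mpr (h2 j hkj hj.2)
      rw [abs_of_neg hneg, ← Complex.ofReal_sub,
        Complex.ofReal_cpow_of_nonpos hneg.le, Complex.ofReal_cpow (by linarith), mul_comm]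
      push_cast
      ring_nf
    · have hnn := sub_nonneg.mpr (h1 j hj.1 (by omega))
      rw [abs_of_nonneg hnn, one_mul, Complex.ofReal_cpow hnn, Complex.ofReal_sub]
  rw [F, Finset.prod_congr rfl hfac, Finset.prod_mul_distrib, Complex.ofReal_prod]
  congr 1
  rw [← Finset.prod_filter, ← Complex.exp_sum]
  congr 1
  push_cast
  rw [Finset.mul_sum]
  refine Finset.sum_congr ?_ fun _ _ => rfl
  ext j
  simp only [Finset.mem_filter, Finset.mem_Icc]
  omega

end ContourClosing

/-- closing the contour around the real axis.  With x₀ = -∞ and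
x_{K+1} = +∞, the integrals J_k of ∏ⱼ|u - xⱼ|^{βⱼ} over the intervals
(x_k, x_{k+1}) satisfy Σ_k exp(iπ Σ_{l>k} β_l)·J_k = 0 in ℂ; equivalently both
the cosine- and sine-weighted real sums vanish. -/
theorem contour_closing_identity
    (K : ℕ) (hK : 2 ≤ K) (x : ℕ → ℝ)
    (hx : ∀ j, 1 ≤ j → j < K → x j < x (j+1))
    (β : ℕ → ℝ) (hβ : ∀ j, 1 ≤ j → j ≤ K → -1 < β j)
    (hsum : (∑ j ∈ Finset.Icc 1 K, β j) < -1)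
    (J : ℕ → ℝ)
    (hJ0 : J 0 = ∫ u in Set.Iio (x 1), ∏ j ∈ Finset.Icc 1 K, |u - x j| ^ β j)
    (hJK : J K = ∫ u in Set.Ioi (x K), ∏ j ∈ Finset.Icc 1 K, |u - x j| ^ β j)
    (hJ : ∀ k, 1 ≤ k → k < K →
      J k = ∫ u in Set.Ioo (x k) (x (k+1)), ∏ j ∈ Finset.Icc 1 K, |u - x j| ^ β j) :
    (∑ k ∈ Finset.range (K+1),
        Complex.exp ((Real.pi : ℂ) * Complex.I * ((∑ l ∈ Finset.Icc (k+1) K, β l : ℝ) : ℂ))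
          * (J k : ℂ)) = 0
    ∧ (∑ k ∈ Finset.range (K+1),
        Real.cos (Real.pi * ∑ l ∈ Finset.Icc (k+1) K, β l) * J k) = 0
    ∧ (∑ k ∈ Finset.range (K+1),
        Real.sin (Real.pi * ∑ l ∈ Finset.Icc (k+1) K, β l) * J k) = 0 := by
  have hlt : ∀ i j, 1 ≤ i → i < j → j ≤ K → x i < x j := by
    intro i j hi hij
    induction j, hij using Nat.le_induction with
    | base => exact fun hj => hx i hi hj
    | succ j hij ih => exact fun hj => (ih (by omega)).trans (hx j (by omega) (by omega))
  have hinj : Set.InjOn x (Finset.Icc 1 K : Finset ℕ) := by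
    intro i hi j hj hxy
    simp only [Finset.coe_Icc, Set.mem_Icc] at hi hj
    rcases lt_trichotomy i j with h | h | h
    · exact absurd hxy (hlt i j hi.1 h hj.2).ne
    · exact h
    · exact absurd hxy (hlt j i hj.1 h hi.2).ne'
  have hβ' : ∀ j ∈ Finset.Icc 1 K, -1 < β j := fun j hj =>
    hβ j (Finset.mem_Icc.mp hj).1 (Finset.mem_Icc.mp hj).2
  have hzero := ContourClosing.integral_F_eq_zero _ x β hinj hβ' hsum
  have hint : Integrable fun u : ℝ => ContourClosing.F (Finset.Icc 1 K) x β u := by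
    simpa using ContourClosing.integrable_F _ x β hinj hβ' hsum le_rfl zero_le_one
  set c : ℕ → ℂ := fun k =>
    Complex.exp ((Real.pi : ℂ) * Complex.I * ((∑ l ∈ Finset.Icc (k+1) K, β l : ℝ) : ℂ)) with hc
  have hle : ∀ i j, 1 ≤ i → i ≤ j → j ≤ K → x i ≤ x j := fun i j hi hij hj =>
    hij.eq_or_lt.elim (fun h => h ▸ le_rfl) fun h => (hlt i j hi h hj).le
  -- On the `k`-th interval the boundary value of `F` is the real integrand times the phase `c k`.
  have hpiece : ∀ (k : ℕ) (S : Set ℝ), MeasurableSet S →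
      (∀ u ∈ S, ∀ j, 1 ≤ j → j ≤ k → x j ≤ u) → (∀ u ∈ S, ∀ j, k + 1 ≤ j → j ≤ K → u < x j) →
      ∫ u in S, ContourClosing.F (Finset.Icc 1 K) x β u =
        c k * ((∫ u in S, ∏ j ∈ Finset.Icc 1 K, |u - x j| ^ β j : ℝ) : ℂ) := by
    intro k S hS h1 h2
    rw [← integral_complex_ofReal, ← integral_const_mul]
    exact setIntegral_congr_fun hS fun u hu =>
      ContourClosing.F_ofReal K k x β (h1 u hu) (h2 u hu)
  have hprefix : ∀ m, 1 ≤ m → m ≤ K →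
      ∫ u in Set.Iio (x m), ContourClosing.F (Finset.Icc 1 K) x β u =
        ∑ k ∈ Finset.range m, c k * (J k : ℂ) := by
    intro m hm
    induction m, hm using Nat.le_induction with
    | base =>
      intro _
      rw [Finset.sum_range_one, hJ0]
      refine hpiece 0 _ measurableSet_Iio (fun _ _ j _ _ => by omega) fun u hu j h1 h2 => ?_
      exact lt_of_lt_of_le hu (hle 1 j le_rfl h1 h2)
    | succ m hm ih =>
      intro hmK
      have hlt' := hx m hm (by omega)
      rw [Finset.sum_range_succ, ← ih (by omega), ← Set.Iio_union_Ico_eq_Iio hlt'.le,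
        setIntegral_union (by
          rw [Set.disjoint_left]; exact fun u h1 h2 => not_lt.mpr h2.1 h1)
          measurableSet_Ico hint.integrableOn hint.integrableOn,
        hJ m hm (by omega), integral_Ico_eq_integral_Ioo]
      congr 1
      refine hpiece m _ measurableSet_Ioo (fun u hu j h1 h2 => ?_) fun u hu j h1 h2 => ?_
      · exact (hle j m h1 h2 (by omega)).trans hu.1.le
      · exact lt_of_lt_of_le hu.2 (hle (m+1) j (by omega) h1 h2)
  have hmain : ∑ k ∈ Finset.range (K+1), c k * (J k : ℂ) = 0 := by
    rw [Finset.sum_range_succ, ← hprefix K (by omega) le_rfl, hJK, ← hpiece K _ measurableSet_Ioi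
      (fun u hu j h1 h2 => (hle j K h1 h2 le_rfl).trans (le_of_lt hu))
      (fun _ _ j _ _ => by omega), ← integral_Ici_eq_integral_Ioi, ← hzero,
      ← setIntegral_union (by
          rw [Set.disjoint_left]; exact fun u h1 h2 => not_lt.mpr (Set.mem_Ici.mp h2) (Set.mem_Iio.mp h1))
          measurableSet_Ici hint.integrableOn hint.integrableOn, Set.Iio_union_Ici,
      setIntegral_univ]
  have hexp : ∀ k, c k * (J k : ℂ) =
      ((Real.cos (Real.pi * ∑ l ∈ Finset.Icc (k+1) K, β l) * J k : ℝ) : ℂ)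
      + ((Real.sin (Real.pi * ∑ l ∈ Finset.Icc (k+1) K, β l) * J k : ℝ) : ℂ) * Complex.I := by
    intro k
    simp only [hc]
    rw [mul_right_comm, ← Complex.ofReal_mul, Complex.exp_mul_I]
    push_cast
    ring
  refine ⟨hmain, ?_, ?_⟩
  · have := congrArg Complex.re hmain
    simpa only [hexp, Complex.re_sum, Complex.add_re, Complex.ofReal_re, Complex.re_ofReal_mul,
      Complex.I_re, mul_zero, add_zero, Complex.zero_re] using this
  · have := congrArg Complex.im hmain
    simpa only [hexp, Complex.im_sum, Complex.add_im, Complex.ofReal_im, Complex.im_ofReal_mul,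
      Complex.I_im, mul_one, zero_add, Complex.zero_im] using this
end

section
/- Let K ≥ 3 be an integer and let i ∈ {2,…,K−1}. Let β_1,…,β_K be real numbers with β_j > −1 for every j, with β_i + β_{i+1} < −1, and with Σ_{j=1}^K β_j an integer that is at most −2. Fix real numbers x_1 < ⋯ < x_i and x_{i+2} < ⋯ < x_K with x_i < x_{i+2}, and for x_{i+1} ∈ (x_i, x_{i+2}) define I(x_{i+1}) = ∫_{x_{i−1}}^{x_i} ∏_{j=1}^K |u−x_j|^{β_j} du. Then, as x_{i+1} → x_i from the right, I(x_{i+1}) / (x_{i+1}−x_i)^{β_i+β_{i+1}+1} converges to −[sin(π β_{i+1})/sin(π(β_i+β_{i+1}))] · [Γ(β_i+1)Γ(β_{i+1}+1)/Γ(β_i+β_{i+1}+2)] · ∏_{j≠i,i+1} |x_i−x_j|^{β_j}. -/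
/-!
Put `a = β i`, `c = β (i+1)` and `d = t - x i`. Reflecting `u = x i - s` turns the integral into
`∫ s in (0, x i - x (i-1)), s ^ a * (s + d) ^ c * g s`, where `g s` is the product over the other
indices; `g` is integrable and tends to `∏ |x i - x j| ^ β j` as `s → 0+`.

The function `g` may blow up at the far endpoint `s = x i - x (i-1)`, so it is cut at a small `δ`
below which it is bounded. On `(0, δ)` the scaling `s = d v` pulls out `d ^ (a + c + 1)`, and
dominated convergence (`tendsto_near`) gives the limit `g(0+) * ∫ v in (0, ∞), v ^ a * (1 + v) ^ c`.
On `[δ, ∞)` the integral stays bounded, so after division by `d ^ (a + c + 1)`, which blows up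
because `a + c < -1`, it vanishes (`tendsto_far`). Finally `v = y / (1 - y)` identifies the
`v`-integral with the Beta value `B(a + 1, -a - c - 1)` (`beta_Ioi`), and Euler's reflection formula
at `c + 1` and `a + c + 2` puts it in the sine form (`beta_reflect`).
-/

open MeasureTheory Filter Set Finset

/-! ### The Beta integral on the half-line -/


lemma image_div_one_sub : (fun y : ℝ => y / (1 - y)) '' Ioo 0 1 = Set.Ioi 0 := by
  ext v
  constructor
  · rintro ⟨y, ⟨h0, h1⟩, rfl⟩
    exact div_pos h0 (by linarith)
  · intro hv
    have hv : 0 < v := hv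
    refine ⟨v / (1 + v), ⟨by positivity, ?_⟩, ?_⟩
    · rw [div_lt_one (by positivity)]; linarith
    · have : 1 + v ≠ 0 := by positivity
      have h2 : 1 - v / (1 + v) = 1 / (1 + v) := by field_simp; ring
      simp only [h2]
      field_simp

/-- Euler's Beta integral over the reals, read off from the normalization of the Beta
distribution. -/
lemma beta_Ioo {p q : ℝ} (hp : 0 < p) (hq : 0 < q) :
    IntegrableOn (fun y : ℝ => y ^ (p - 1) * (1 - y) ^ (q - 1)) (Ioo 0 1) ∧
    ∫ y in Ioo (0 : ℝ) 1, y ^ (p - 1) * (1 - y) ^ (q - 1) = ProbabilityTheory.beta p q := by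
  have hB := ProbabilityTheory.beta_pos hp hq
  have h1 := ProbabilityTheory.lintegral_betaPDF_eq_one hp hq
  rw [ProbabilityTheory.lintegral_betaPDF] at h1
  have hm : Measurable (fun y : ℝ => 1 / ProbabilityTheory.beta p q * y ^ (p - 1) * (1 - y) ^ (q - 1)) := by
    fun_prop
  have hnn : 0 ≤ᵐ[volume.restrict (Ioo (0:ℝ) 1)]
      (fun y : ℝ => 1 / ProbabilityTheory.beta p q * y ^ (p - 1) * (1 - y) ^ (q - 1)) := by
    filter_upwards [ae_restrict_mem measurableSet_Ioo] with y hy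
    have : 0 < y := hy.1
    have : 0 < 1 - y := by linarith [hy.2]
    simp only [Pi.zero_apply]
    positivity
  have hI : ∫ y in Ioo (0 : ℝ) 1,
      1 / ProbabilityTheory.beta p q * y ^ (p - 1) * (1 - y) ^ (q - 1) = 1 := by
    rw [integral_eq_lintegral_of_nonneg_ae hnn hm.aestronglyMeasurable, h1]; simp
  have hint : IntegrableOn (fun y : ℝ => 1 / ProbabilityTheory.beta p q * y ^ (p - 1) * (1 - y) ^ (q - 1))
      (Ioo 0 1) := by
    -- the integral of a non-integrable function is `0`, whereas this one is `1`
    by_contra hc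
    rw [integral_undef hc] at hI
    norm_num at hI
  have he : ∀ y : ℝ, y ^ (p - 1) * (1 - y) ^ (q - 1) = ProbabilityTheory.beta p q *
      (1 / ProbabilityTheory.beta p q * y ^ (p - 1) * (1 - y) ^ (q - 1)) := by
    intro y; field_simp
  simp_rw [he]
  refine ⟨hint.const_mul _, ?_⟩
  rw [integral_const_mul, hI, mul_one]

/-- The half-line form of the Beta integral, by the substitution `v = y / (1 - y)`. -/
lemma beta_Ioi {a c : ℝ} (ha : -1 < a) (hac : a + c < -1) :
    IntegrableOn (fun v : ℝ => v ^ a * (1 + v) ^ c) (Ioi 0) ∧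
    ∫ v in Ioi (0 : ℝ), v ^ a * (1 + v) ^ c = ProbabilityTheory.beta (a + 1) (-a - c - 1) := by
  obtain ⟨h1, h2⟩ := beta_Ioo (p := a + 1) (q := -a - c - 1) (by linarith) (by linarith)
  have hd : ∀ y ∈ Ioo (0 : ℝ) 1, HasDerivWithinAt (fun y : ℝ => y / (1 - y))
      (1 / (1 - y) ^ 2) (Ioo 0 1) y := by
    intro y hy
    have : 1 - y ≠ 0 := by linarith [hy.2]
    refine HasDerivAt.hasDerivWithinAt ?_
    have h := (hasDerivAt_id' y).fun_div ((hasDerivAt_id' y).const_sub 1) this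
    rwa [show 1 * (1 - y) - y * -1 = 1 by ring] at h
  have hinj : InjOn (fun y : ℝ => y / (1 - y)) (Ioo 0 1) := by
    intro y hy w hw h
    have : 1 - y ≠ 0 := by linarith [hy.2]
    have : 1 - w ≠ 0 := by linarith [hw.2]
    simp only at h
    field_simp at h
    linarith
  have he : EqOn (fun y : ℝ => |1 / (1 - y) ^ 2| • ((y / (1 - y)) ^ a * (1 + y / (1 - y)) ^ c))
      (fun y : ℝ => y ^ (a + 1 - 1) * (1 - y) ^ (-a - c - 1 - 1)) (Ioo 0 1) := by
    intro y hy
    have h0 : 0 < y := hy.1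
    have h1 : 0 < 1 - y := by linarith [hy.2]
    have h3 : 1 + y / (1 - y) = (1 - y)⁻¹ := by field_simp; ring
    have h4 : |1 / (1 - y) ^ 2| = (1 - y) ^ (-2 : ℝ) := by
      rw [abs_of_pos (by positivity), Real.rpow_neg h1.le]; simp
    have h5 : -a - c - 1 - 1 = -2 + (-a + -c) := by ring
    simp only
    rw [h3, h4, Real.div_rpow h0.le h1.le, Real.inv_rpow h1.le, h5, Real.rpow_add h1,
      Real.rpow_add h1, Real.rpow_neg h1.le a, Real.rpow_neg h1.le c, smul_eq_mul,
      add_sub_cancel_right]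
    ring
  rw [← image_div_one_sub]
  constructor
  · rw [integrableOn_image_iff_integrableOn_abs_deriv_smul measurableSet_Ioo hd hinj]
    exact h1.congr_fun he.symm measurableSet_Ioo
  · rw [integral_image_eq_integral_abs_deriv_smul measurableSet_Ioo hd hinj, ← h2]
    exact setIntegral_congr_fun measurableSet_Ioo he

lemma beta_reflect {a c : ℝ} (ha : -1 < a) (hc : -1 < c) (hac : a + c < -1) :
    ProbabilityTheory.beta (a + 1) (-a - c - 1) =
    -(Real.sin (Real.pi * c) / Real.sin (Real.pi * (a + c)))
      * (Real.Gamma (a + 1) * Real.Gamma (c + 1) / Real.Gamma (a + c + 2)) := by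
  have g1 := Real.Gamma_mul_Gamma_one_sub (c + 1)
  have g2 := Real.Gamma_mul_Gamma_one_sub (a + c + 2)
  have s1 : Real.sin (Real.pi * (c + 1)) = - Real.sin (Real.pi * c) := by
    rw [mul_add, mul_one, Real.sin_add_pi]
  have s2 : Real.sin (Real.pi * (a + c + 2)) = Real.sin (Real.pi * (a + c)) := by
    rw [mul_add, mul_comm Real.pi 2, Real.sin_add_two_pi]
  have p1 := Real.Gamma_pos_of_pos (show 0 < 1 - (c + 1) by linarith)
  have p2 := Real.Gamma_pos_of_pos (show 0 < c + 1 by linarith)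
  have p3 := Real.Gamma_pos_of_pos (show 0 < a + c + 2 by linarith)
  have p4 := Real.Gamma_pos_of_pos (show 0 < 1 - (a + c + 2) by linarith)
  have n1 : Real.sin (Real.pi * (c + 1)) ≠ 0 := by
    intro h; rw [h, div_zero] at g1; exact (mul_pos p2 p1).ne' g1
  have n2 : Real.sin (Real.pi * (a + c + 2)) ≠ 0 := by
    intro h; rw [h, div_zero] at g2; exact (mul_pos p3 p4).ne' g2
  rw [s1] at g1 n1
  rw [s2] at g2 n2
  unfold ProbabilityTheory.beta
  rw [show a + 1 + (-a - c - 1) = 1 - (c + 1) by ring,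
    show -a - c - 1 = 1 - (a + c + 2) by ring]
  have n1' := neg_ne_zero.mp n1
  rw [eq_div_iff n1] at g1
  rw [eq_div_iff n2] at g2
  rw [← neg_div, div_mul_div_comm, div_eq_div_iff p1.ne' (mul_ne_zero n2 p3.ne')]
  linear_combination Real.Gamma (a + 1) * (g2 - g1)
/-! ### Asymptotics of the integral against the kernel `s ^ a * (s + d) ^ c` -/

lemma scale_kernel {a c d v : ℝ} (hd : 0 < d) (hv : 0 < v) :
    (d * v) ^ a * (d * v + d) ^ c = d ^ (a + c) * (v ^ a * (1 + v) ^ c) := by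
  rw [show d * v + d = d * (1 + v) by ring, Real.mul_rpow hd.le hv.le,
    Real.mul_rpow hd.le (by positivity), Real.rpow_add hd]
  ring

lemma integrableOn_kernel {a c d : ℝ} (ha : -1 < a) (hac : a + c < -1) (hd : 0 < d) :
    IntegrableOn (fun s : ℝ => s ^ a * (s + d) ^ c) (Ioi 0) := by
  have := integrableOn_Ioi_comp_mul_left_iff (fun s : ℝ => s ^ a * (s + d) ^ c) 0 hd
  rw [mul_zero] at this
  rw [← this]
  refine IntegrableOn.congr_fun ((beta_Ioi ha hac).1.const_mul (d ^ (a + c))) ?_ measurableSet_Ioi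
  intro v hv
  exact (scale_kernel hd hv).symm

/-- The limit for a weight `h` that is bounded on the whole line: after `s = d v` the integrand is
dominated by `C` times the Beta kernel. -/
lemma tendsto_near {a c C g0 : ℝ} (ha : -1 < a) (hac : a + c < -1) (h : ℝ → ℝ)
    (hm : Measurable h) (hC : ∀ s, |h s| ≤ C)
    (h0 : Tendsto h (nhdsWithin 0 (Ioi 0)) (nhds g0)) :
    Tendsto (fun d : ℝ => (∫ s in Ioi (0 : ℝ), s ^ a * (s + d) ^ c * h s) / d ^ (a + c + 1))
      (nhdsWithin 0 (Ioi 0)) (nhds (ProbabilityTheory.beta (a + 1) (-a - c - 1) * g0)) := by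
  obtain ⟨hi, hv⟩ := beta_Ioi ha hac
  have key : Tendsto (fun d : ℝ => ∫ v in Ioi (0 : ℝ), v ^ a * (1 + v) ^ c * h (d * v))
      (nhdsWithin 0 (Ioi 0)) (nhds (∫ v in Ioi (0 : ℝ), v ^ a * (1 + v) ^ c * g0)) := by
    refine tendsto_integral_filter_of_dominated_convergence
      (fun v => v ^ a * (1 + v) ^ c * C) ?_ ?_ (hi.mul_const C) ?_
    · refine Eventually.of_forall fun d => Measurable.aestronglyMeasurable ?_
      fun_prop
    · refine Eventually.of_forall fun d => ?_
      filter_upwards [ae_restrict_mem measurableSet_Ioi] with v hv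
      have hv : 0 < v := hv
      have : 0 ≤ v ^ a * (1 + v) ^ c := by positivity
      rw [norm_mul, Real.norm_of_nonneg this, Real.norm_eq_abs]
      exact mul_le_mul_of_nonneg_left (hC _) this
    · filter_upwards [ae_restrict_mem measurableSet_Ioi] with v hv
      have hv : 0 < v := hv
      refine (h0.comp ?_).const_mul _
      refine tendsto_nhdsWithin_of_tendsto_nhds_of_eventually_within _ ?_ ?_
      · have : Tendsto (fun d : ℝ => d * v) (nhds 0) (nhds (0 * v)) := tendsto_id.mul_const v
        rw [zero_mul] at this
        exact this.mono_left nhdsWithin_le_nhds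
      · filter_upwards [self_mem_nhdsWithin] with d hd
        exact mul_pos hd hv
  rw [integral_mul_const, hv] at key
  refine key.congr' ?_
  filter_upwards [self_mem_nhdsWithin] with d hd
  have hd : 0 < d := hd
  have hs := integral_comp_mul_left_Ioi' (fun s : ℝ => s ^ a * (s + d) ^ c * h s) 0 hd
  rw [mul_zero] at hs
  rw [← hs, Real.rpow_add hd, Real.rpow_one]
  have : ∫ v in Ioi (0 : ℝ), (d * v) ^ a * (d * v + d) ^ c * h (d * v)
      = ∫ v in Ioi (0 : ℝ), d ^ (a + c) * (v ^ a * (1 + v) ^ c * h (d * v)) := by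
    refine setIntegral_congr_fun measurableSet_Ioi fun v hv => ?_
    rw [scale_kernel hd hv]; ring
  rw [this, integral_const_mul, smul_eq_mul]
  have hp := Real.rpow_pos_of_pos hd (a + c)
  rw [eq_div_iff (mul_pos hp hd).ne']
  ring

lemma far_bound {a c d δ s y : ℝ} (ha : a ≤ 0) (hc : c ≤ 0) (hd : 0 < d) (hδ : 0 < δ) (hs : δ ≤ s) :
    |s ^ a * (s + d) ^ c * y| ≤ δ ^ a * δ ^ c * |y| := by
  have hs0 : 0 < s := hδ.trans_le hs
  rw [abs_mul, abs_of_nonneg (by positivity)]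
  have h1 := Real.rpow_le_rpow_of_nonpos hδ hs ha
  have h2 := Real.rpow_le_rpow_of_nonpos hδ (show δ ≤ s + d by linarith) hc
  exact mul_le_mul_of_nonneg_right (mul_le_mul h1 h2 (by positivity) (by positivity))
    (abs_nonneg y)

lemma integrable_far {a c d δ : ℝ} (ha : a ≤ 0) (hc : c ≤ 0) (hd : 0 < d) (hδ : 0 < δ) (k : ℝ → ℝ)
    (hk : IntegrableOn k (Ioi 0)) (hk0 : ∀ s < δ, k s = 0) :
    IntegrableOn (fun s : ℝ => s ^ a * (s + d) ^ c * k s) (Ioi 0) := by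
  refine Integrable.mono' (hk.abs.const_mul (δ ^ a * δ ^ c)) ?_ ?_
  · refine AEStronglyMeasurable.mul (Measurable.aestronglyMeasurable (by fun_prop)) hk.1
  · refine Eventually.of_forall fun s => ?_
    by_cases hs : s < δ
    · simp [hk0 s hs]
    · exact far_bound ha hc hd hδ (not_lt.mp hs)

/-- A weight vanishing near `0` contributes nothing in the limit: its integral is bounded uniformly
in `d`, while `d ^ (a + c + 1) → ∞`. -/
lemma tendsto_far {a c δ : ℝ} (ha : a ≤ 0) (hc : c ≤ 0) (hac : a + c < -1) (hδ : 0 < δ) (k : ℝ → ℝ)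
    (hk : IntegrableOn k (Ioi 0)) (hk0 : ∀ s < δ, k s = 0) :
    Tendsto (fun d : ℝ => (∫ s in Ioi (0 : ℝ), s ^ a * (s + d) ^ c * k s) / d ^ (a + c + 1))
      (nhdsWithin 0 (Ioi 0)) (nhds 0) := by
  have hz : Tendsto (fun d : ℝ => (∫ s in Ioi (0 : ℝ), δ ^ a * δ ^ c * |k s|) / d ^ (a + c + 1))
      (nhdsWithin 0 (Ioi 0)) (nhds 0) :=
    tendsto_const_nhds.div_atTop (tendsto_rpow_neg_nhdsGT_zero (by linarith))
  refine squeeze_zero_norm' ?_ hz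
  filter_upwards [self_mem_nhdsWithin] with d hd
  have hd : 0 < d := hd
  rw [norm_div, Real.norm_of_nonneg (by positivity : 0 ≤ d ^ (a + c + 1))]
  gcongr
  refine norm_integral_le_of_norm_le (hk.abs.const_mul (δ ^ a * δ ^ c)) ?_
  refine Eventually.of_forall fun s => ?_
  by_cases hs : s < δ
  · simp [hk0 s hs]
  · exact far_bound ha hc hd hδ (not_lt.mp hs)

/-- The general weight, split as `g = h + k` at a point `δ` below which `|g| < |g0| + 1`. -/
lemma tendsto_kernel {a c g0 : ℝ} (ha : -1 < a) (hc : -1 < c) (hac : a + c < -1) (g : ℝ → ℝ)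
    (hm : Measurable g) (hg : IntegrableOn g (Ioi 0))
    (h0 : Tendsto g (nhdsWithin 0 (Ioi 0)) (nhds g0)) :
    Tendsto (fun d : ℝ => (∫ s in Ioi (0 : ℝ), s ^ a * (s + d) ^ c * g s) / d ^ (a + c + 1))
      (nhdsWithin 0 (Ioi 0)) (nhds (ProbabilityTheory.beta (a + 1) (-a - c - 1) * g0)) := by
  have hb : ∀ᶠ s in nhdsWithin (0 : ℝ) (Ioi 0), |g s| < |g0| + 1 :=
    h0.abs.eventually_lt_const (by linarith)
  obtain ⟨δ, hδ, hδb⟩ := mem_nhdsGT_iff_exists_Ioo_subset.mp hb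
  have hδ : 0 < δ := hδ
  set h : ℝ → ℝ := (Ioo 0 δ).indicator g with hh
  set k : ℝ → ℝ := (Ici δ).indicator g with hk
  have hmh : Measurable h := hm.indicator measurableSet_Ioo
  have hCh : ∀ s, |h s| ≤ |g0| + 1 := by
    intro s
    by_cases hs : s ∈ Ioo 0 δ
    · rw [hh, indicator_of_mem hs]; exact (hδb hs).le
    · rw [hh, indicator_of_notMem hs, abs_zero]; positivity
  have hh0 : Tendsto h (nhdsWithin 0 (Ioi 0)) (nhds g0) := by
    refine h0.congr' ?_
    filter_upwards [Ioo_mem_nhdsGT hδ] with s hs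
    rw [hh, indicator_of_mem hs]
  have hki : IntegrableOn k (Ioi 0) := hg.indicator measurableSet_Ici
  have hk0 : ∀ s < δ, k s = 0 := fun s hs => indicator_of_notMem (by simpa using hs) _
  have hsum := (tendsto_near ha hac h hmh hCh hh0).add
    (tendsto_far (by linarith) (by linarith) hac hδ k hki hk0)
  rw [add_zero] at hsum
  refine hsum.congr' ?_
  filter_upwards [self_mem_nhdsWithin] with d hd
  have hd : 0 < d := hd
  have hih : IntegrableOn (fun s : ℝ => s ^ a * (s + d) ^ c * h s) (Ioi 0) := by
    refine (integrableOn_kernel ha hac hd).mul_bdd (c := |g0| + 1) hmh.aestronglyMeasurable ?_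
    exact Eventually.of_forall hCh
  rw [← add_div, ← integral_add hih
    (integrable_far (by linarith) (by linarith) hd hδ k hki hk0)]
  congr 1
  refine setIntegral_congr_fun measurableSet_Ioi fun s hs => ?_
  have hs : 0 < s := hs
  simp only [hh, hk]
  by_cases hsδ : s < δ
  · rw [indicator_of_mem (show s ∈ Ioo 0 δ from ⟨hs, hsδ⟩),
      indicator_of_notMem (show s ∉ Ici δ by simpa using hsδ)]; ring
  · rw [indicator_of_notMem (show s ∉ Ioo 0 δ from fun h => hsδ h.2),
      indicator_of_mem (show s ∈ Ici δ from not_lt.mp hsδ)]; ring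

/-! ### The product over the remaining points -/

lemma continuousAt_prod_abs_rpow (E : Finset ℕ) (β x : ℕ → ℝ) (X s : ℝ)
    (h : ∀ j ∈ E, X - s - x j ≠ 0) :
    ContinuousAt (fun s : ℝ => ∏ j ∈ E, |X - s - x j| ^ β j) s := by
  refine tendsto_finsetProd _ fun j hj => ?_
  refine ContinuousAt.rpow_const (by fun_prop) (Or.inl ?_)
  exact abs_ne_zero.mpr (h j hj)

/-- With no other `x j` in `[x m, X]`, the only singularity of the product on `[0, X - x m]` is the
integrable power at `s = X - x m`; the remaining factors are continuous there. -/
lemma integrableOn_prod_abs_rpow (E : Finset ℕ) (β x : ℕ → ℝ) (X : ℝ) {m : ℕ} (hm : m ∈ E)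
    (hβ : -1 < β m) (hmX : x m < X)
    (hE : ∀ j ∈ E, j ≠ m → x j < x m ∨ X < x j) :
    IntegrableOn (fun s : ℝ => ∏ j ∈ E, |X - s - x j| ^ β j) (Ioo 0 (X - x m)) := by
  have hM : 0 ≤ X - x m := by linarith
  have h1 : IntegrableOn (fun s : ℝ => |X - s - x m| ^ β m) (Set.Icc 0 (X - x m)) := by
    have := ((intervalIntegral.intervalIntegrable_rpow' (a := 0) (b := X - x m) hβ).comp_sub_left
      (X - x m)).symm
    simp only [sub_self, sub_zero] at this
    rw [intervalIntegrable_iff_integrableOn_Icc_of_le hM] at this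
    refine this.congr_fun (fun s hs => ?_) measurableSet_Icc
    have : 0 ≤ X - x m - s := by linarith [hs.2]
    simp only
    rw [show X - s - x m = X - x m - s by ring, abs_of_nonneg this]
  have h2 : ContinuousOn (fun s : ℝ => ∏ j ∈ E.erase m, |X - s - x j| ^ β j)
      (Set.Icc 0 (X - x m)) := by
    intro s hs
    refine (continuousAt_prod_abs_rpow _ β x X s fun j hj => ?_).continuousWithinAt
    rcases hE j (mem_of_mem_erase hj) (ne_of_mem_erase hj) with h | h
    · have := hs.2; intro h'; linarith
    · have := hs.1; intro h'; linarith
  have h3 := (h1.mul_continuousOn h2 isCompact_Icc).mono_set Ioo_subset_Icc_self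
  refine h3.congr_fun (fun s _ => ?_) measurableSet_Ioo
  exact mul_prod_erase E (fun j => |X - s - x j| ^ β j) hm

lemma integral_Ioo_reflect (F : ℝ → ℝ) {L X : ℝ} (h : L ≤ X) :
    ∫ u in Ioo L X, F u = ∫ s in Ioo 0 (X - L), F (X - s) := by
  rw [← integral_Ioc_eq_integral_Ioo, ← integral_Ioc_eq_integral_Ioo,
    ← intervalIntegral.integral_of_le h, ← intervalIntegral.integral_of_le (by linarith),
    intervalIntegral.integral_comp_sub_left]
  simp

/-! ### The interval collapse -/

/-- asymptotic behavior of the Coulomb gas integral over the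
interval (x_{i-1}, x_i) as x_{i+1} → x_i from the right (the third case of
interval collapse).  The varying point x_{i+1} is represented by `t`, via
`Function.update x (i+1) t`. -/
theorem interval_collapse_case_three
    (K : ℕ) (hK : 3 ≤ K) (i : ℕ) (hi1 : 2 ≤ i) (hi2 : i ≤ K - 1)
    (β : ℕ → ℝ) (hβ : ∀ j, 1 ≤ j → j ≤ K → -1 < β j)
    (hβsum : β i + β (i+1) < -1)
    (z : ℤ) (hz : (∑ j ∈ Finset.Icc 1 K, β j) = (z : ℝ)) (hz2 : z ≤ -2)
    (x : ℕ → ℝ)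
    (hx : ∀ j k, 1 ≤ j → j < k → k ≤ K → j ≠ i+1 → k ≠ i+1 → x j < x k) :
    Tendsto
      (fun t : ℝ =>
        (∫ u in Set.Ioo (x (i-1)) (x i),
            ∏ j ∈ Finset.Icc 1 K, |u - Function.update x (i+1) t j| ^ β j)
          / (t - x i) ^ (β i + β (i+1) + 1))
      (nhdsWithin (x i) (Set.Ioi (x i)))
      (nhds (-(Real.sin (Real.pi * β (i+1)) / Real.sin (Real.pi * (β i + β (i+1))))
        * (Real.Gamma (β i + 1) * Real.Gamma (β (i+1) + 1)
            / Real.Gamma (β i + β (i+1) + 2))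
        * ∏ j ∈ ((Finset.Icc 1 K).erase i).erase (i+1), |x i - x j| ^ β j)) := by
  have hi0 : i ∈ Finset.Icc 1 K := Finset.mem_Icc.mpr ⟨by omega, by omega⟩
  have hi1' : i + 1 ∈ (Finset.Icc 1 K).erase i :=
    mem_erase.mpr ⟨by omega, Finset.mem_Icc.mpr ⟨by omega, by omega⟩⟩
  have ha := hβ i (by omega) (by omega)
  have hc := hβ (i + 1) (by omega) (by omega)
  have hLX : x (i - 1) < x i := hx _ _ (by omega) (by omega) (by omega) (by omega) (by omega)
  set E := ((Finset.Icc 1 K).erase i).erase (i + 1) with hE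
  have hEmem : ∀ j ∈ E, j ≠ i + 1 ∧ j ≠ i ∧ 1 ≤ j ∧ j ≤ K := by
    intro j hj
    simpa [hE] using hj
  have hmE : i - 1 ∈ E := by
    simp only [hE, mem_erase, Finset.mem_Icc]
    omega
  have hEx : ∀ j ∈ E, j ≠ i - 1 → x j < x (i - 1) ∨ x i < x j := by
    intro j hj hji
    obtain ⟨h1, h2, h3, h4⟩ := hEmem j hj
    rcases lt_or_ge j (i - 1) with h | h
    · exact Or.inl (hx _ _ h3 h (by omega) h1 (by omega))
    · exact Or.inr (hx _ _ (by omega) (by omega) h4 (by omega) h1)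
  have hEne : ∀ j ∈ E, x i - 0 - x j ≠ 0 := by
    intro j hj h
    by_cases hji : j = i - 1
    · subst hji; linarith
    · rcases hEx j hj hji with h' | h' <;> linarith
  set P : ℝ → ℝ := fun s => ∏ j ∈ E, |x i - s - x j| ^ β j with hP
  set g : ℝ → ℝ := (Ioo 0 (x i - x (i - 1))).indicator P with hg
  have hPm : Measurable P := by
    refine Finset.measurable_fun_prod _ fun j _ => ?_
    fun_prop
  have hgm : Measurable g := hPm.indicator measurableSet_Ioo
  have hgi : IntegrableOn g (Set.Ioi 0) :=
    ((integrable_indicator_iff measurableSet_Ioo).mpr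
      (integrableOn_prod_abs_rpow E β x (x i) hmE (hβ _ (by omega) (by omega)) hLX
        hEx)).integrableOn
  have hg0 : Tendsto g (nhdsWithin 0 (Set.Ioi 0)) (nhds (∏ j ∈ E, |x i - x j| ^ β j)) := by
    have h := (continuousAt_prod_abs_rpow E β x (x i) 0 hEne).tendsto.mono_left
      (nhdsWithin_le_nhds (s := Set.Ioi 0))
    simp only [sub_zero] at h
    refine h.congr' ?_
    filter_upwards [Ioo_mem_nhdsGT (sub_pos.mpr hLX)] with s hs
    rw [hg, indicator_of_mem hs]
  have hshift : Tendsto (fun t : ℝ => t - x i) (nhdsWithin (x i) (Set.Ioi (x i)))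
      (nhdsWithin 0 (Set.Ioi 0)) := by
    refine tendsto_nhdsWithin_of_tendsto_nhds_of_eventually_within _ ?_ ?_
    · have : Tendsto (fun t : ℝ => t - x i) (nhds (x i)) (nhds (x i - x i)) :=
        tendsto_id.sub_const _
      rw [sub_self] at this
      exact this.mono_left nhdsWithin_le_nhds
    · filter_upwards [self_mem_nhdsWithin] with t ht
      exact sub_pos.mpr (show x i < t from ht)
  have hmain := (tendsto_kernel ha hc hβsum g hgm hgi hg0).comp hshift
  rw [beta_reflect ha hc hβsum] at hmain
  refine hmain.congr' ?_
  filter_upwards [self_mem_nhdsWithin] with t ht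
  have ht : x i < t := ht
  simp only [Function.comp_apply]
  congr 1
  rw [integral_Ioo_reflect _ hLX.le]
  have h1 : ∀ s, s ^ β i * (s + (t - x i)) ^ β (i + 1) * g s
      = (Ioo 0 (x i - x (i - 1))).indicator
        (fun s => s ^ β i * (s + (t - x i)) ^ β (i + 1) * P s) s := by
    intro s
    rw [hg, indicator_mul_right]
  simp_rw [h1]
  rw [setIntegral_indicator measurableSet_Ioo,
    inter_eq_self_of_subset_right (fun s hs => hs.1)]
  refine setIntegral_congr_fun measurableSet_Ioo fun s hs => ?_
  have hs0 : 0 < s := hs.1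
  rw [← mul_prod_erase _ _ hi0, ← mul_prod_erase _ _ hi1', Function.update_self,
    Function.update_of_ne (by omega), ← mul_assoc]
  congr 1
  · rw [show x i - s - x i = -s by ring, abs_neg, abs_of_pos hs0,
      show x i - s - t = -(s + (t - x i)) by ring, abs_neg, abs_of_pos (by linarith)]
  · refine prod_congr rfl fun j hj => ?_
    rw [Function.update_of_ne (hEmem j hj).1]
end
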